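/- Let W : ℝ² → [0,∞) be C² with W(0)=0, D²W(0) = diag(2λ₁, 2λ₂) with 0 < λ₁ < λ₂ in suitable orthonormal coordinates. There exist η, ε, c, C > 0 such that for all R > 0 and all f ∈ H¹([−R,R],ℝ²) with f(−R) = a = (a₁,a₂), f(R) = b = (b₁,b₂), d(a,0) = d(b,0) = η, a₁ < 0 < b₁, and |a₂| ≤ ε|a₁|, |b₂| ≤ ε|b₁|, one has E(f,[−R,R]) ≥ 2η + c( min_{t∈[−R,R]} |f(t)|² + e^{−CR} ). -/

import Mathlib

open Real MeasureTheory Filter Topology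

/-- The degenerate geodesic distance associated to a nonnegative potential `W` on ℝ² ≅ ℂ. -/
noncomputable def degDist (W : ℂ → ℝ) (p q : ℂ) : ℝ :=
  sInf {c | ∃ γ : ℝ → ℂ, ContDiff ℝ 1 γ ∧ γ 0 = p ∧ γ 1 = q ∧
    c = ∫ t in (0:ℝ)..1, Real.sqrt 2 * Real.sqrt (W (γ t)) * ‖deriv γ t‖}

/-- The one-dimensional Allen–Cahn energy of `f` on `[a,b]`. -/
noncomputable def oneDEnergy (W : ℂ → ℝ) (f : ℝ → ℂ) (a b : ℝ) : ℝ :=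
  ∫ t in a..b, ((1 / 2) * ‖deriv f t‖ ^ 2 + W (f t))

/-- second order Taylor estimate at the well -/
theorem cee_taylor (W : ℂ → ℝ) (hWreg : ContDiff ℝ 2 W)
    (hW : ∀ q, 0 ≤ W q) (hW0 : W 0 = 0) (lam1 lam2 : ℝ)
    (hHess : ∀ v : ℂ, iteratedFDeriv ℝ 2 W 0 ![v, v] =
      2 * lam1 * v.re ^ 2 + 2 * lam2 * v.im ^ 2) (κ : ℝ) (hκ : 0 < κ) :
    ∃ r > 0, ∀ z : ℂ, ‖z‖ ≤ r → |W z - (lam1 * z.re ^ 2 + lam2 * z.im ^ 2)| ≤ κ * ‖z‖ ^ 2 := by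
  have hcont : Continuous (iteratedFDeriv ℝ 2 W) :=
    hWreg.continuous_iteratedFDeriv (m := 2) le_rfl
  obtain ⟨r, hr, hball⟩ := Metric.continuousAt_iff.1 (hcont.continuousAt (x := 0)) κ hκ
  refine ⟨r / 2, by positivity, fun z hz => ?_⟩
  have hT := map_add_eq_sum_add_integral_iteratedFDeriv (f := W) (x := 0) (y := z) (n := 1)
    (fun t _ => by exact_mod_cast hWreg.contDiffAt)
  have hgrad : fderiv ℝ W 0 = 0 := by
    apply IsLocalMin.fderiv_eq_zero
    exact Filter.Eventually.of_forall (fun q => by simpa [hW0] using hW q)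
  have hvec : (fun _ : Fin 2 => z) = ![z, z] := by
    ext i; fin_cases i <;> rfl
  simp only [Finset.sum_range_succ, Finset.sum_range_zero, zero_add, iteratedFDeriv_zero_apply,
    iteratedFDeriv_one_apply, hgrad, hW0] at hT
  norm_num at hT
  rw [hvec] at hT
  have hI : ∫ t in (0:ℝ)..1, (1 - t) * iteratedFDeriv ℝ 2 W 0 ![z, z]
      = lam1 * z.re ^ 2 + lam2 * z.im ^ 2 := by
    rw [intervalIntegral.integral_mul_const, hHess]
    have : ∫ t in (0:ℝ)..1, (1 - t) = 1 / 2 := by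
      rw [intervalIntegral.integral_sub (by simp) (by simp)]
      simp; norm_num
    rw [this]; ring
  have hc1 : Continuous (fun t : ℝ => iteratedFDeriv ℝ 2 W (t * z) ![z, z]) := by
    have : Continuous (fun t : ℝ => iteratedFDeriv ℝ 2 W ((t:ℂ) * z)) :=
      hcont.comp (by fun_prop)
    exact (continuous_eval_const _).comp this
  rw [hT, ← hI, ← intervalIntegral.integral_sub]
  · have hb : ∀ t ∈ Set.uIoc (0:ℝ) 1, ‖(1 - t) * iteratedFDeriv ℝ 2 W (t * z) ![z, z]
        - (1 - t) * iteratedFDeriv ℝ 2 W 0 ![z, z]‖ ≤ κ * ‖z‖ ^ 2 := by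
      intro t ht
      rw [Set.uIoc_of_le zero_le_one] at ht
      rw [← mul_sub, norm_mul]
      have h1 : ‖(1 - t)‖ ≤ 1 := by
        rw [Real.norm_eq_abs, abs_le]; constructor <;> linarith [ht.1, ht.2]
      have h2 : ‖iteratedFDeriv ℝ 2 W (t * z) ![z, z] - iteratedFDeriv ℝ 2 W 0 ![z, z]‖
          ≤ κ * ‖z‖ ^ 2 := by
        have h3 : dist (iteratedFDeriv ℝ 2 W (t * z)) (iteratedFDeriv ℝ 2 W 0) < κ := by
          apply hball
          rw [dist_zero_right, norm_mul, Complex.norm_real, Real.norm_eq_abs, abs_of_pos ht.1]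
          nlinarith [ht.1, ht.2, norm_nonneg z]
        rw [dist_eq_norm] at h3
        have h4 := (iteratedFDeriv ℝ 2 W (t * z) - iteratedFDeriv ℝ 2 W 0).le_opNorm ![z, z]
        simp [Fin.prod_univ_two] at h4
        calc _ ≤ _ := h4
          _ ≤ κ * (‖z‖ * ‖z‖) := by gcongr
          _ = _ := by ring
      nlinarith [norm_nonneg (1 - t), norm_nonneg (iteratedFDeriv ℝ 2 W (t * z) ![z, z] - iteratedFDeriv ℝ 2 W 0 ![z, z])]
    simpa using intervalIntegral.norm_integral_le_of_norm_le_const hb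
  · exact (by fun_prop : Continuous _).intervalIntegrable _ _
  · exact (by fun_prop : Continuous _).intervalIntegrable _ _

/-- the weighted length -/
noncomputable def ceeCost (W : ℂ → ℝ) (f : ℝ → ℂ) (a b : ℝ) : ℝ :=
  ∫ t in a..b, Real.sqrt 2 * Real.sqrt (W (f t)) * ‖deriv f t‖

theorem cee_cont {W : ℂ → ℝ} (hWc : Continuous W) {f : ℝ → ℂ} (hf : ContDiff ℝ 1 f) :
    Continuous (fun t => Real.sqrt 2 * Real.sqrt (W (f t)) * ‖deriv f t‖) := by
  have h1 := hf.continuous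
  have h2 := hf.continuous_deriv le_rfl
  fun_prop

theorem cee_cost_nonneg (W : ℂ → ℝ) (f : ℝ → ℂ) {a b : ℝ} (hab : a ≤ b) :
    0 ≤ ceeCost W f a b :=
  intervalIntegral.integral_nonneg hab (fun t _ => by positivity)

theorem cee_cost_add {W : ℂ → ℝ} (hWc : Continuous W) {f : ℝ → ℂ} (hf : ContDiff ℝ 1 f)
    (a b c : ℝ) : ceeCost W f a b + ceeCost W f b c = ceeCost W f a c :=
  intervalIntegral.integral_add_adjacent_intervals ((cee_cont hWc hf).intervalIntegrable _ _)
    ((cee_cont hWc hf).intervalIntegrable _ _)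

/-- calibration lower bound -/
theorem cee_calib {W : ℂ → ℝ} (hWc : Continuous W) {f : ℝ → ℂ} (hf : ContDiff ℝ 1 f)
    {a b : ℝ} (hab : a ≤ b) (g g' : ℝ → ℝ) (hg : ∀ t, HasDerivAt g (g' t) t)
    (hle : ∀ t ∈ Set.Ioo a b, g' t ≤ Real.sqrt 2 * Real.sqrt (W (f t)) * ‖deriv f t‖) :
    g b - g a ≤ ceeCost W f a b :=
  intervalIntegral.sub_le_integral_of_hasDeriv_right_of_le hab
    (fun t _ => (hg t).continuousAt.continuousWithinAt) (fun t _ => (hg t).hasDerivWithinAt)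
    ((cee_cont hWc hf).integrableOn_Icc) hle

theorem cee_upper {W : ℂ → ℝ} (hWc : Continuous W) {f : ℝ → ℂ} (hf : ContDiff ℝ 1 f)
    {a b : ℝ} (hab : a ≤ b) (g g' : ℝ → ℝ) (hg : ∀ t, HasDerivAt g (g' t) t)
    (hle : ∀ t ∈ Set.Ioo a b, Real.sqrt 2 * Real.sqrt (W (f t)) * ‖deriv f t‖ ≤ g' t) :
    ceeCost W f a b ≤ g b - g a :=
  intervalIntegral.integral_le_sub_of_hasDeriv_right_of_le hab
    (fun t _ => (hg t).continuousAt.continuousWithinAt) (fun t _ => (hg t).hasDerivWithinAt)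
    ((cee_cont hWc hf).integrableOn_Icc) hle

theorem cee_cost_neg (W : ℂ → ℝ) (f : ℝ → ℂ) (a b : ℝ) :
    ceeCost W (fun t => f (-t)) a b = ceeCost W f (-b) (-a) := by
  unfold ceeCost
  rw [← intervalIntegral.integral_comp_neg]
  congr 1; ext t
  rw [deriv_comp_neg, norm_neg]

theorem cee_degDist_le (W : ℂ → ℝ) {γ : ℝ → ℂ} (hγ : ContDiff ℝ 1 γ) :
    degDist W (γ 0) (γ 1) ≤ ceeCost W γ 0 1 := by
  apply csInf_le
  · refine ⟨0, ?_⟩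
    rintro c ⟨γ, -, -, -, rfl⟩
    exact cee_cost_nonneg W γ zero_le_one
  · exact ⟨γ, hγ, rfl, rfl, rfl⟩

theorem cee_le_degDist (W : ℂ → ℝ) {p q : ℂ} {m : ℝ}
    (h : ∀ γ : ℝ → ℂ, ContDiff ℝ 1 γ → γ 0 = p → γ 1 = q → m ≤ ceeCost W γ 0 1) :
    m ≤ degDist W p q := by
  apply le_csInf
  · refine ⟨_, fun t => p + t • (q - p), by fun_prop, by simp, by simp, rfl⟩
  · rintro c ⟨γ, h1, h2, h3, rfl⟩
    exact h γ h1 h2 h3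

/-- reparametrisation -/
theorem cee_reparam {W : ℂ → ℝ} (hWc : Continuous W) {f : ℝ → ℂ} (hf : ContDiff ℝ 1 f)
    {h : ℝ → ℝ} (hh : ContDiff ℝ 1 h) (hm : Monotone h) (a b : ℝ) :
    ceeCost W (fun t => f (h t)) a b = ceeCost W f (h a) (h b) := by
  unfold ceeCost
  have hd : ∀ t, HasDerivAt h (deriv h t) t := fun t =>
    (hh.differentiable one_ne_zero).differentiableAt.hasDerivAt
  rw [← intervalIntegral.integral_comp_mul_deriv (f := h) (f' := deriv h)
    (fun t _ => hd t) (hh.continuous_deriv le_rfl).continuousOn (cee_cont hWc hf)]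
  congr 1; ext t
  have h1 : HasDerivAt (fun t => f (h t)) ((deriv h t) • deriv f (h t)) t :=
    ((hf.differentiable one_ne_zero).differentiableAt.hasDerivAt).scomp t (hd t)
  rw [h1.deriv, norm_smul, Real.norm_eq_abs, abs_of_nonneg hm.deriv_nonneg]
  simp only [Function.comp]; ring

theorem cee_cost_congr (W : ℂ → ℝ) {f g : ℝ → ℂ} {a b : ℝ} (hab : a ≤ b)
    (h : ∀ t ∈ Set.Ioo a b, f t = g t) : ceeCost W f a b = ceeCost W g a b := by
  unfold ceeCost
  rw [intervalIntegral.integral_of_le hab, intervalIntegral.integral_of_le hab,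
    MeasureTheory.integral_Ioc_eq_integral_Ioo, MeasureTheory.integral_Ioc_eq_integral_Ioo]
  apply MeasureTheory.setIntegral_congr_fun measurableSet_Ioo
  intro t ht
  have : f =ᶠ[𝓝 t] g := by
    filter_upwards [Ioo_mem_nhds ht.1 ht.2] with s hs using h s hs
  simp only [this.deriv_eq, h t ht]

/-- concatenation -/
theorem cee_concat {W : ℂ → ℝ} (hWc : Continuous W) {f g : ℝ → ℂ} (hf : ContDiff ℝ 1 f)
    (hg : ContDiff ℝ 1 g) {a b T : ℝ} (hab : a ≤ b) (hT : 0 ≤ T) (hfg : g 0 = f b) :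
    degDist W (f a) (g T) ≤ ceeCost W f a b + ceeCost W g 0 T := by
  set h1 : ℝ → ℝ := fun t => a + (b - a) * Real.smoothTransition (2 * t) with hh1
  set h2 : ℝ → ℝ := fun t => T * Real.smoothTransition (2 * t - 1) with hh2
  have c0 : ContDiff ℝ 1 Real.smoothTransition := Real.smoothTransition.contDiff (n := 1)
  have c1 : ContDiff ℝ 1 h1 := contDiff_const.add (contDiff_const.mul
    (c0.comp (contDiff_const.mul contDiff_id)))
  have c2 : ContDiff ℝ 1 h2 := contDiff_const.mul
    (c0.comp ((contDiff_const.mul contDiff_id).sub contDiff_const))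
  have m1 : Monotone h1 := fun s t hst => by
    have := Real.smoothTransition.monotone (by linarith : 2 * s ≤ 2 * t)
    simp only [hh1]; nlinarith
  have m2 : Monotone h2 := fun s t hst => by
    have := Real.smoothTransition.monotone (by linarith : 2 * s - 1 ≤ 2 * t - 1)
    simp only [hh2]; nlinarith
  set Γ : ℝ → ℂ := fun t => f (h1 t) + g (h2 t) - f b with hΓ
  have cΓ : ContDiff ℝ 1 Γ := ((hf.comp c1).add (hg.comp c2)).sub contDiff_const
  have e1 : ∀ t, t ≤ 1 / 2 → Γ t = f (h1 t) := fun t ht => by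
    have : h2 t = 0 := by
      simp only [hh2]; rw [Real.smoothTransition.zero_of_nonpos (by linarith)]; simp
    simp only [hΓ, this, hfg]; ring
  have e2 : ∀ t, 1 / 2 ≤ t → Γ t = g (h2 t) := fun t ht => by
    have : h1 t = b := by
      simp only [hh1]; rw [Real.smoothTransition.one_of_one_le (by linarith)]; ring
    simp only [hΓ, this]; ring
  have v1 : h1 0 = a := by simp [hh1]
  have v2 : h1 (1/2) = b := by simp [hh1]
  have v3 : h2 (1/2) = 0 := by simp [hh2]
  have v4 : h2 1 = T := by simp only [hh2]; norm_num
  have key := cee_degDist_le W cΓ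
  rw [e1 0 (by norm_num), e2 1 (by norm_num), v1, v4] at key
  rw [← cee_cost_add hWc cΓ 0 (1/2) 1,
    cee_cost_congr W (by norm_num) (fun t ht => e1 t ht.2.le),
    cee_cost_congr W (a := 1/2) (by norm_num) (fun t ht => e2 t ht.1.le),
    cee_reparam hWc hf c1 m1, cee_reparam hWc hg c2 m2, v1, v2, v3, v4] at key
  exact key

theorem cee_re {f : ℝ → ℂ} (hf : ContDiff ℝ 1 f) (t : ℝ) :
    HasDerivAt (fun s => (f s).re) (deriv f t).re t :=
  (Complex.reCLM.hasFDerivAt.comp_hasDerivAt t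
    ((hf.differentiable one_ne_zero).differentiableAt.hasDerivAt) :)

theorem cee_im {f : ℝ → ℂ} (hf : ContDiff ℝ 1 f) (t : ℝ) :
    HasDerivAt (fun s => (f s).im) (deriv f t).im t :=
  (Complex.imCLM.hasFDerivAt.comp_hasDerivAt t
    ((hf.differentiable one_ne_zero).differentiableAt.hasDerivAt) :)

theorem cee_normsq (z : ℂ) : ‖z‖ ^ 2 = z.re ^ 2 + z.im ^ 2 := by
  rw [Complex.sq_norm, Complex.normSq_apply]; ring

theorem cee_nsq {f : ℝ → ℂ} (hf : ContDiff ℝ 1 f) (t : ℝ) :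
    HasDerivAt (fun s => ‖f s‖ ^ 2)
      (2 * ((f t).re * (deriv f t).re + (f t).im * (deriv f t).im)) t := by
  have h := ((cee_re hf t).pow 2).add ((cee_im hf t).pow 2)
  have e : (fun s => ‖f s‖ ^ 2) = fun s => (f s).re ^ 2 + (f s).im ^ 2 := by
    ext s; exact cee_normsq _
  rw [e]
  refine h.congr_deriv ?_
  simp; ring

theorem cee_cs (p q A : ℝ) (hA : 0 ≤ A) (w : ℂ) (h : p ^ 2 + q ^ 2 ≤ A ^ 2) :
    p * w.re + q * w.im ≤ A * ‖w‖ := by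
  apply le_of_sq_le_sq _ (by positivity)
  rw [mul_pow, cee_normsq]
  nlinarith [sq_nonneg (p * w.im - q * w.re), sq_nonneg w.re, sq_nonneg w.im]

theorem cee_sqrt (x : ℝ) (hx : 0 ≤ x) : (Real.sqrt 2 * Real.sqrt x) ^ 2 = 2 * x := by
  rw [mul_pow, Real.sq_sqrt (by norm_num), Real.sq_sqrt hx]

/-- gradient bound gives calibration density bound -/
theorem cee_dens {W : ℂ → ℝ} (hW : ∀ q, 0 ≤ W q) (z w : ℂ) (p q : ℝ)
    (h : p ^ 2 + q ^ 2 ≤ 2 * W z) :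
    p * w.re + q * w.im ≤ Real.sqrt 2 * Real.sqrt (W z) * ‖w‖ := by
  apply cee_cs _ _ _ (by positivity)
  rw [cee_sqrt _ (hW z)]; exact h

theorem cee_radial {W : ℂ → ℝ} (hWc : Continuous W) (hW : ∀ q, 0 ≤ W q) {f : ℝ → ℂ}
    (hf : ContDiff ℝ 1 f) {a b r k s : ℝ} (hab : a ≤ b) (hs : s ^ 2 = 1)
    (hk : ∀ z : ℂ, ‖z‖ ≤ r → k ^ 2 * ‖z‖ ^ 2 ≤ 2 * W z)
    (hr : ∀ t ∈ Set.Ioo a b, ‖f t‖ ≤ r) :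
    s * (k / 2) * ‖f b‖ ^ 2 - s * (k / 2) * ‖f a‖ ^ 2 ≤ ceeCost W f a b := by
  apply cee_calib hWc hf hab (fun t => s * (k / 2) * ‖f t‖ ^ 2) _
    (fun t => (cee_nsq hf t).const_mul _)
  intro t ht
  have := cee_dens hW (f t) (deriv f t) (s * k * (f t).re) (s * k * (f t).im) (by
    refine le_trans (le_of_eq ?_) (hk _ (hr t ht))
    rw [cee_normsq]; linear_combination (k ^ 2 * ((f t).re ^ 2 + (f t).im ^ 2)) * hs)
  refine le_trans (le_of_eq ?_) this
  ring

theorem cee_exit {W : ℂ → ℝ} (hWc : Continuous W) (hW : ∀ q, 0 ≤ W q) {f : ℝ → ℂ}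
    (hf : ContDiff ℝ 1 f) {a b r k : ℝ} (hk0 : 0 ≤ k) (hr0 : 0 ≤ r)
    (hk : ∀ z : ℂ, ‖z‖ ≤ r → k ^ 2 * ‖z‖ ^ 2 ≤ 2 * W z)
    (ha : ‖f a‖ ≤ r / 2) (t0 : ℝ) (ht0 : t0 ∈ Set.Icc a b) (hout : r < ‖f t0‖) :
    3 * k * r ^ 2 / 8 ≤ ceeCost W f a b := by
  have hc := hf.continuous
  have hcomp : IsCompact (Set.Icc a b ∩ {t | r ≤ ‖f t‖}) :=
    isCompact_Icc.inter_right (isClosed_le continuous_const hc.norm)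
  obtain ⟨s, ⟨hs1, hs2⟩, hs3⟩ := hcomp.exists_isLeast ⟨t0, ht0, hout.le⟩
  have h1 := cee_radial hWc hW hf (s := 1) hs1.1 (by norm_num) hk (fun t ht => by
    by_contra hcon
    have := hs3 ⟨⟨ht.1.le, ht.2.le.trans hs1.2⟩, (not_le.1 hcon).le⟩
    linarith [ht.2])
  have h2 := cee_cost_nonneg W f hs1.2
  have h3 := cee_cost_add hWc hf a s b
  have h4 : r ^ 2 ≤ ‖f s‖ ^ 2 := by
    have : r ≤ ‖f s‖ := hs2
    gcongr
  have h5 : ‖f a‖ ^ 2 ≤ (r / 2) ^ 2 := by gcongr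
  nlinarith

theorem cee_small {W : ℂ → ℝ} (hWc : Continuous W) (hW : ∀ q, 0 ≤ W q)
    {r k : ℝ} (hk0 : 0 ≤ k) (hr0 : 0 ≤ r)
    (hk : ∀ z : ℂ, ‖z‖ ≤ r → k ^ 2 * ‖z‖ ^ 2 ≤ 2 * W z)
    (a : ℂ) (ha : r / 2 ≤ ‖a‖) : k * r ^ 2 / 8 ≤ degDist W a 0 := by
  apply cee_le_degDist
  intro f hf h0 h1
  have hc := hf.continuous
  have hcomp : IsCompact (Set.Icc (0:ℝ) 1 ∩ {t | r / 2 ≤ ‖f t‖}) :=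
    isCompact_Icc.inter_right (isClosed_le continuous_const hc.norm)
  obtain ⟨s, ⟨hs1, hs2⟩, hs3⟩ := hcomp.exists_isGreatest ⟨0, by simp, by simpa [h0] using ha⟩
  have h1' := cee_radial hWc hW hf (s := -1) hs1.2 (by norm_num) hk (fun t ht => by
    by_contra hcon
    have := hs3 ⟨⟨hs1.1.trans ht.1.le, ht.2.le⟩, by
      show r / 2 ≤ ‖f t‖
      linarith [not_le.1 hcon]⟩
    linarith [ht.1])
  have h2 := cee_cost_nonneg W f hs1.1
  have h3 := cee_cost_add hWc hf 0 s 1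
  have h4 : (r / 2) ^ 2 ≤ ‖f s‖ ^ 2 := by
    have : r / 2 ≤ ‖f s‖ := hs2
    gcongr
  rw [h1, norm_zero] at h1'
  nlinarith

/-- explicit competitor -/
theorem cee_comp {W : ℂ → ℝ} (hWc : Continuous W) (hW : ∀ q, 0 ≤ W q) {r κ m M : ℝ}
    (hκ : 0 < κ) (hm : 0 < m) (hM : 0 < M)
    (hU : ∀ z : ℂ, ‖z‖ ≤ r → 2 * W z ≤ (1 + κ) * (m ^ 2 * z.re ^ 2 + M ^ 2 * z.im ^ 2))
    (z : ℂ) (hz : ‖z‖ ≤ r) :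
    ∃ g : ℝ → ℂ, ContDiff ℝ 1 g ∧ ∃ T, 0 ≤ T ∧ g 0 = z ∧ g T = 0 ∧
      ceeCost W g 0 T ≤ (1 + κ) * ((m + κ) * z.re ^ 2 + (M + κ) * z.im ^ 2) / 2 := by
  set g1 : ℝ → ℝ := fun t => z.re * (Real.exp (-m * t) * (1 - κ * t)) with hg1
  set g2 : ℝ → ℝ := fun t => z.im * (Real.exp (-M * t) * (1 - κ * t)) with hg2
  set g : ℝ → ℂ := fun t => g1 t • (1:ℂ) + g2 t • Complex.I with hg
  have c1 : ContDiff ℝ 1 g1 := by fun_prop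
  have c2 : ContDiff ℝ 1 g2 := by fun_prop
  have cg : ContDiff ℝ 1 g := by fun_prop
  have gre : ∀ t, (g t).re = g1 t := fun t => by simp [hg]
  have gim : ∀ t, (g t).im = g2 t := fun t => by simp [hg]
  have d : ∀ (x μ t : ℝ), HasDerivAt (fun t => x * (Real.exp (-μ * t) * (1 - κ * t)))
      (-μ * (x * (Real.exp (-μ * t) * (1 - κ * t))) - κ * x * Real.exp (-μ * t)) t := by
    intro x μ t
    have h1 : HasDerivAt (fun t => Real.exp (-μ * t)) (Real.exp (-μ * t) * (-μ * 1)) t :=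
      ((hasDerivAt_id t).const_mul (-μ)).exp
    have h2 : HasDerivAt (fun t => 1 - κ * t) (-(κ * 1)) t :=
      ((hasDerivAt_id t).const_mul κ).const_sub 1
    refine ((h1.mul h2).const_mul x).congr_deriv ?_
    ring
  have d1 : ∀ t, HasDerivAt g1 (-m * g1 t - κ * z.re * Real.exp (-m * t)) t := d z.re m
  have d2 : ∀ t, HasDerivAt g2 (-M * g2 t - κ * z.im * Real.exp (-M * t)) t := d z.im M
  have dre : ∀ t, (deriv g t).re = -m * g1 t - κ * z.re * Real.exp (-m * t) := fun t => by
    have h := cee_re cg t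
    simp only [gre] at h
    exact h.unique (d1 t)
  have dim : ∀ t, (deriv g t).im = -M * g2 t - κ * z.im * Real.exp (-M * t) := fun t => by
    have h := cee_im cg t
    simp only [gim] at h
    exact h.unique (d2 t)
  have g10 : g1 0 = z.re := by simp [hg1]
  have g20 : g2 0 = z.im := by simp [hg2]
  have hκT : κ * (1 / κ) = 1 := by field_simp
  have g1T : g1 (1 / κ) = 0 := by simp only [hg1, hκT]; ring
  have g2T : g2 (1 / κ) = 0 := by simp only [hg2, hκT]; ring
  refine ⟨g, cg, 1 / κ, by positivity, ?_, ?_, ?_⟩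
  · apply Complex.ext
    · rw [gre, g10]
    · rw [gim, g20]
  · apply Complex.ext
    · rw [gre, g1T]; rfl
    · rw [gim, g2T]; rfl
  have key := cee_upper hWc cg (a := 0) (b := 1 / κ) (by positivity)
    (fun t => (1 + κ) * ((κ ^ 2 * (z.re ^ 2 + z.im ^ 2) / 2) * t
      - (m / 2 * g1 t ^ 2 + M / 2 * g2 t ^ 2)))
    (fun t => (1 + κ) * ((κ ^ 2 * (z.re ^ 2 + z.im ^ 2) / 2)
      - (m * g1 t * (-m * g1 t - κ * z.re * Real.exp (-m * t))
        + M * g2 t * (-M * g2 t - κ * z.im * Real.exp (-M * t))))) (by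
      intro t
      have h := (((hasDerivAt_id t).const_mul (κ ^ 2 * (z.re ^ 2 + z.im ^ 2) / 2)).sub
        ((((d1 t).pow 2).const_mul (m / 2)).add (((d2 t).pow 2).const_mul (M / 2)))).const_mul
          (1 + κ)
      refine h.congr_deriv ?_
      rw [show (2 - 1 : ℕ) = 1 from rfl]
      push_cast; ring) (by
      intro t ht
      have hκt : 0 ≤ 1 - κ * t ∧ 1 - κ * t ≤ 1 := by
        have h1 : κ * t ≤ κ * (1 / κ) := by gcongr; exact ht.2.le
        have h2 : 0 ≤ κ * t := mul_nonneg hκ.le ht.1.le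
        constructor <;> linarith
      have hexp : ∀ μ : ℝ, 0 < μ → Real.exp (-μ * t) ≤ 1 := fun μ hμ => by
        rw [Real.exp_le_one_iff]; nlinarith [ht.1]
      have hsq : ∀ x μ : ℝ, 0 < μ →
          (x * (Real.exp (-μ * t) * (1 - κ * t))) ^ 2 ≤ x ^ 2 := fun x μ hμ => by
        have h1 : Real.exp (-μ * t) * (1 - κ * t) ≤ 1 :=
          mul_le_one₀ (hexp μ hμ) hκt.1 hκt.2
        have h2 : 0 ≤ Real.exp (-μ * t) * (1 - κ * t) := mul_nonneg (Real.exp_pos _).le hκt.1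
        rw [mul_pow]
        have h3 : (Real.exp (-μ * t) * (1 - κ * t)) ^ 2 ≤ 1 := pow_le_one₀ h2 h1
        nlinarith [sq_nonneg x]
      have hsq2 : ∀ x μ : ℝ, 0 < μ → (κ * x * Real.exp (-μ * t)) ^ 2 ≤ κ ^ 2 * x ^ 2 :=
        fun x μ hμ => by
        have h3 : (Real.exp (-μ * t)) ^ 2 ≤ 1 := pow_le_one₀ (Real.exp_pos _).le (hexp μ hμ)
        rw [mul_pow, mul_pow]
        nlinarith [mul_nonneg (sq_nonneg κ) (sq_nonneg x)]
      have hin : ‖g t‖ ≤ r := by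
        refine le_trans ?_ hz
        apply le_of_sq_le_sq _ (norm_nonneg _)
        rw [cee_normsq, cee_normsq, gre, gim]
        exact add_le_add (hsq z.re m hm) (hsq z.im M hM)
      have hWt := hU _ hin
      rw [gre, gim] at hWt
      have hq := cee_sqrt _ (hW (g t))
      have hn := cee_normsq (deriv g t)
      have am : Real.sqrt 2 * Real.sqrt (W (g t)) * ‖deriv g t‖ ≤
          W (g t) + ‖deriv g t‖ ^ 2 / 2 := by
        nlinarith [sq_nonneg (Real.sqrt 2 * Real.sqrt (W (g t)) - ‖deriv g t‖)]
      refine am.trans ?_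
      have e1 := hsq2 z.re m hm
      have e2 := hsq2 z.im M hM
      rw [← dre, ← dim]
      have f1 : κ * z.re * Real.exp (-m * t) = -m * g1 t - (deriv g t).re := by
        rw [dre]; ring
      have f2 : κ * z.im * Real.exp (-M * t) = -M * g2 t - (deriv g t).im := by
        rw [dim]; ring
      rw [f1] at e1
      rw [f2] at e2
      rw [hn]
      nlinarith [mul_nonneg hκ.le (add_nonneg (sq_nonneg (deriv g t).re)
        (sq_nonneg (deriv g t).im)), mul_nonneg (by linarith : 0 ≤ 1 + κ) (sub_nonneg.2 e1),
        mul_nonneg (by linarith : 0 ≤ 1 + κ) (sub_nonneg.2 e2)])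
  refine key.trans (le_of_eq ?_)
  simp only [g10, g20, g1T, g2T]
  field_simp
  ring

theorem cee_half {W : ℂ → ℝ} (hWc : Continuous W) (hW : ∀ q, 0 ≤ W q) {r κ m M ε D : ℝ}
    (hκ : 0 < κ) (hm : 0 < m) (hM : 0 < M) (hε : 0 < ε)
    (hL : ∀ z : ℂ, ‖z‖ ≤ r → (1 - κ) * (m ^ 2 * z.re ^ 2 + M ^ 2 * z.im ^ 2) ≤ 2 * W z)
    (hU : ∀ z : ℂ, ‖z‖ ≤ r → 2 * W z ≤ (1 + κ) * (m ^ 2 * z.re ^ 2 + M ^ 2 * z.im ^ 2))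
    (hP1 : ∀ X Y : ℝ, 0 ≤ X → ε * X ≤ Y → (D * X + 2 * m * ε * Y) ^ 2
      + (m * Y - 2 * m * ε * X) ^ 2 ≤ (1 - κ) * (m ^ 2 * X ^ 2 + M ^ 2 * Y ^ 2))
    (hP2 : (1 + κ) * ((m + κ) + (M + κ) * ε ^ 2) ≤ D + 3 * m * ε ^ 2)
    {f : ℝ → ℂ} (hf : ContDiff ℝ 1 f) {t0 t2 : ℝ} (h02 : t0 ≤ t2) (hre : (f t2).re = 0)
    (ha : |(f t0).im| ≤ ε * |(f t0).re|) (hr : ∀ t ∈ Set.Icc t0 t2, ‖f t‖ ≤ r) :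
    ∃ t ∈ Set.Icc t0 t2, degDist W (f t0) 0 + m / 2 * ‖f t‖ ^ 2 ≤ ceeCost W f t0 t2 := by
  have hc := hf.continuous
  have hcre : Continuous fun t => (f t).re := Complex.continuous_re.comp hc
  have hcim : Continuous fun t => (f t).im := Complex.continuous_im.comp hc
  have hcomp : IsCompact (Set.Icc t0 t2 ∩ {t | (f t).re = 0}) :=
    isCompact_Icc.inter_right (isClosed_eq hcre continuous_const)
  obtain ⟨s, ⟨hs1, hs2⟩, hs3⟩ := hcomp.exists_isLeast ⟨t2, ⟨h02, le_rfl⟩, hre⟩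
  have hs2' : (f s).re = 0 := hs2
  have hcomp2 : IsCompact (Set.Icc t0 s ∩ {t | |(f t).im| ≤ ε * |(f t).re|}) :=
    isCompact_Icc.inter_right (isClosed_le (by fun_prop) (by fun_prop))
  obtain ⟨t1, ⟨ht1, ht1'⟩, ht1''⟩ := hcomp2.exists_isGreatest ⟨t0, ⟨le_rfl, hs1.1⟩, ha⟩
  have hsec : |(f t1).im| ≤ ε * |(f t1).re| := ht1'
  have hout : ∀ t ∈ Set.Ioo t1 s, ε * |(f t).re| < |(f t).im| := fun t ht => by
    by_contra hcon
    have := ht1'' ⟨⟨ht1.1.trans ht.1.le, ht.2.le⟩, not_lt.1 hcon⟩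
    linarith [ht.1]
  have hne : ∀ t ∈ Set.Ioo t1 s, (f t).re * (f t).im ≠ 0 := fun t ht => by
    apply mul_ne_zero
    · intro h0
      have := hs3 ⟨⟨ht1.1.trans ht.1.le, ht.2.le.trans hs1.2⟩, h0⟩
      linarith [ht.2]
    · have h1 := hout t ht
      have : 0 < |(f t).im| := lt_of_le_of_lt (by positivity) h1
      exact abs_pos.1 this
  have hsign : ∃ σ : ℝ, σ ^ 2 = 1 ∧ ∀ t ∈ Set.Ioo t1 s, 0 ≤ σ * ((f t).re * (f t).im) := by
    by_cases h : ∀ t ∈ Set.Ioo t1 s, 0 ≤ (f t).re * (f t).im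
    · exact ⟨1, by norm_num, fun t ht => by simpa using h t ht⟩
    · refine ⟨-1, by norm_num, fun t ht => ?_⟩
      push Not at h
      obtain ⟨t', ht', hneg⟩ := h
      by_contra hcon
      have hpos : 0 < (f t).re * (f t).im := by linarith [not_le.1 hcon]
      obtain ⟨u, hu, hu0⟩ := isPreconnected_Ioo.intermediate_value ht' ht
        (f := fun t => (f t).re * (f t).im) (by fun_prop) ⟨hneg.le, hpos.le⟩
      exact hne u hu hu0
  obtain ⟨σ, hσ, hσs⟩ := hsign
  have hbd : ε * |(f t1).re| ≤ |(f t1).im| ∧ 0 ≤ σ * ((f t1).re * (f t1).im) := by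
    rcases ht1.2.eq_or_lt with h | h
    · rw [h, hs2']; simp
    · have hev : ∀ᶠ t in 𝓝[>] t1, t ∈ Set.Ioo t1 s := Ioo_mem_nhdsGT h
      constructor
      · have l1 : Tendsto (fun t => ε * |(f t).re|) (𝓝[>] t1) (𝓝 (ε * |(f t1).re|)) :=
          ((by fun_prop : Continuous fun t => ε * |(f t).re|).tendsto t1).mono_left
            nhdsWithin_le_nhds
        have l2 : Tendsto (fun t => |(f t).im|) (𝓝[>] t1) (𝓝 (|(f t1).im|)) :=
          ((by fun_prop : Continuous fun t => |(f t).im|).tendsto t1).mono_left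
            nhdsWithin_le_nhds
        exact le_of_tendsto_of_tendsto l1 l2 (hev.mono fun t ht => (hout t ht).le)
      · have l1 : Tendsto (fun t => σ * ((f t).re * (f t).im)) (𝓝[>] t1)
            (𝓝 (σ * ((f t1).re * (f t1).im))) :=
          ((by fun_prop : Continuous fun t => σ * ((f t).re * (f t).im)).tendsto t1).mono_left
            nhdsWithin_le_nhds
        exact ge_of_tendsto l1 (hev.mono fun t ht => hσs t ht)
  have habs : ∀ x y : ℝ, 0 ≤ σ * (x * y) → σ * (x * y) = |x| * |y| := fun x y h => by
    rw [← abs_of_nonneg h, abs_mul, abs_mul]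
    have : |σ| = 1 := by
      rw [← Real.sqrt_sq_eq_abs, hσ, Real.sqrt_one]
    rw [this, one_mul]
  have hcal := cee_calib hWc hf ht1.2
    (fun t => m / 2 * (f t).im ^ 2 - 2 * m * ε * σ * ((f t).re * (f t).im)
      - D / 2 * (f t).re ^ 2)
    (fun t => (-(2 * m * ε * σ * (f t).im) - D * (f t).re) * (deriv f t).re
      + (m * (f t).im - 2 * m * ε * σ * (f t).re) * (deriv f t).im) (by
      intro t
      have hx := cee_re hf t
      have hy := cee_im hf t
      have h := (((hy.pow 2).const_mul (m / 2)).sub ((hx.mul hy).const_mul (2 * m * ε * σ))).sub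
        ((hx.pow 2).const_mul (D / 2))
      refine h.congr_deriv ?_
      rw [show (2 - 1 : ℕ) = 1 from rfl]
      push_cast; ring) (by
      intro t ht
      apply cee_dens hW
      have hin : ‖f t‖ ≤ r := hr t ⟨ht1.1.trans ht.1.le, ht.2.le.trans hs1.2⟩
      refine le_trans ?_ (hL _ hin)
      have h1 := hP1 |(f t).re| |(f t).im| (abs_nonneg _) (hout t ht).le
      have h2 := habs _ _ (hσs t ht)
      rw [sq_abs, sq_abs] at h1
      refine le_trans (le_of_eq ?_) h1
      have e1 := sq_abs (f t).re
      have e2 := sq_abs (f t).im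
      linear_combination (4 * m * ε * D - 4 * m ^ 2 * ε) * h2
        + (4 * m ^ 2 * ε ^ 2 * ((f t).im ^ 2 + (f t).re ^ 2)) * hσ
        - (D ^ 2 + 4 * m ^ 2 * ε ^ 2) * e1 - (m ^ 2 + 4 * m ^ 2 * ε ^ 2) * e2)
  obtain ⟨g, hg, T, hT, hg0, hgT, hgc⟩ := cee_comp hWc hW hκ hm hM hU (f t1)
    (hr t1 ⟨ht1.1, ht1.2.trans hs1.2⟩)
  have hcon := cee_concat hWc hf hg ht1.1 hT hg0
  rw [hgT] at hcon
  refine ⟨s, hs1, ?_⟩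
  have a1 := cee_cost_add hWc hf t0 t1 s
  have a2 := cee_cost_add hWc hf t0 s t2
  have a3 := cee_cost_nonneg W f hs1.2
  have heq : |(f t1).im| = ε * |(f t1).re| := le_antisymm hsec hbd.1
  have hy2 : (f t1).im ^ 2 = ε ^ 2 * (f t1).re ^ 2 := by
    rw [← sq_abs, heq, mul_pow, sq_abs]
  have hxy : σ * ((f t1).re * (f t1).im) = ε * (f t1).re ^ 2 := by
    rw [habs _ _ hbd.2, heq, ← sq_abs (f t1).re]; ring
  have hn : ‖f s‖ ^ 2 = (f s).im ^ 2 := by rw [cee_normsq, hs2']; ring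
  rw [hn]
  simp only [hs2'] at hcal
  rw [hy2] at hgc hcal
  have hcal2 : m / 2 * (f s).im ^ 2 + (D + 3 * m * ε ^ 2) / 2 * (f t1).re ^ 2
      ≤ ceeCost W f t1 s := by
    refine le_trans (le_of_eq ?_) hcal
    linear_combination (-2 * m * ε) * hxy
  nlinarith [mul_le_mul_of_nonneg_right hP2 (sq_nonneg (f t1).re)]

/-- finite-time excess -/
theorem cee_excess {W : ℂ → ℝ} (hWc : Continuous W) (hW : ∀ q, 0 ≤ W q) {r L : ℝ} (hL0 : 0 < L)
    (hL : ∀ z : ℂ, ‖z‖ ≤ r → 2 * W z ≤ L ^ 2 * ‖z‖ ^ 2)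
    {f : ℝ → ℂ} (hf : ContDiff ℝ 1 f) {R : ℝ} (hR : 0 < R)
    (hr : ∀ t ∈ Set.Icc (-R) R, ‖f t‖ ≤ r) (t : ℝ) (ht : t ∈ Set.Icc (-R) R) :
    Real.exp (-(6 * L) * R) * ‖f (-R)‖ ^ 2 ≤
      ‖f t‖ ^ 2 + 2 / L * (oneDEnergy W f (-R) R - ceeCost W f (-R) R) := by
  have hc := hf.continuous
  have hc' := hf.continuous_deriv le_rfl
  set G : ℝ → ℝ := fun s => (‖deriv f s‖ - Real.sqrt 2 * Real.sqrt (W (f s))) ^ 2 with hG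
  have hGc : Continuous G := by fun_prop
  have hE : oneDEnergy W f (-R) R - ceeCost W f (-R) R = 1 / 2 * ∫ s in (-R)..R, G s := by
    unfold oneDEnergy ceeCost
    rw [← intervalIntegral.integral_sub, ← intervalIntegral.integral_const_mul]
    · congr 1; ext s
      simp only [hG]
      linear_combination (-1 / 2) * cee_sqrt _ (hW (f s))
    · exact (by fun_prop : Continuous _).intervalIntegrable _ _
    · exact (cee_cont hWc hf).intervalIntegrable _ _
  have hsub : ∫ s in (-R)..t, G s ≤ ∫ s in (-R)..R, G s := by
    rw [← intervalIntegral.integral_add_adjacent_intervals (hGc.intervalIntegrable (-R) t)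
      (hGc.intervalIntegrable t R)]
    have : 0 ≤ ∫ s in t..R, G s :=
      intervalIntegral.integral_nonneg ht.2 (fun s _ => by simp only [hG]; positivity)
    linarith
  set A := Real.exp (3 * L * (t + R)) with hA
  have hA0 : 0 < A := Real.exp_pos _
  have hd : ∀ s, HasDerivAt (fun s => -(Real.exp (3 * L * (s + R)) * ‖f s‖ ^ 2))
      (-(Real.exp (3 * L * (s + R)) * (3 * L) * ‖f s‖ ^ 2 + Real.exp (3 * L * (s + R)) *
        (2 * ((f s).re * (deriv f s).re + (f s).im * (deriv f s).im)))) s := by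
    intro s
    have h1 : HasDerivAt (fun s => Real.exp (3 * L * (s + R)))
        (Real.exp (3 * L * (s + R)) * (3 * L * 1)) s :=
      (((hasDerivAt_id s).add_const R).const_mul (3 * L)).exp
    refine ((h1.mul (cee_nsq hf s)).neg).congr_deriv ?_
    ring
  have key := intervalIntegral.sub_le_integral_of_hasDeriv_right_of_le
    (φ := fun s => A / L * G s) ht.1
    (fun s _ => (hd s).continuousAt.continuousWithinAt) (fun s _ => (hd s).hasDerivWithinAt)
    ((by fun_prop : Continuous fun s => A / L * G s).integrableOn_Icc) (by
      intro s hs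
      have hin := hr s ⟨hs.1.le, hs.2.le.trans ht.2⟩
      have h1 := hL _ hin
      rw [← cee_sqrt _ (hW (f s)), ← mul_pow] at h1
      have h2 : Real.sqrt 2 * Real.sqrt (W (f s)) ≤ L * ‖f s‖ := le_of_sq_le_sq h1 (by positivity)
      have h3 := cee_cs (-(f s).re) (-(f s).im) ‖f s‖ (norm_nonneg _) (deriv f s)
        (by rw [cee_normsq]; simp)
      set e := Real.exp (3 * L * (s + R)) with he
      have he0 : 0 < e := Real.exp_pos _
      have heA : e ≤ A := by
        rw [he, hA, Real.exp_le_exp]; nlinarith [hs.2]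
      have h4 : -(3 * L * ‖f s‖ ^ 2) - 2 * ((f s).re * (deriv f s).re + (f s).im * (deriv f s).im)
          ≤ G s / L := by
        rw [le_div_iff₀ hL0]
        simp only [hG]
        set g := ‖deriv f s‖ - Real.sqrt 2 * Real.sqrt (W (f s)) with hg
        have h5 : ‖deriv f s‖ ≤ g + L * ‖f s‖ := by rw [hg]; linarith
        have h6 : ‖f s‖ * ‖deriv f s‖ ≤ ‖f s‖ * (g + L * ‖f s‖) :=
          mul_le_mul_of_nonneg_left h5 (norm_nonneg _)
        have h7 : -(3 * L * ‖f s‖ ^ 2) - 2 * ((f s).re * (deriv f s).re + (f s).im * (deriv f s).im)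
          ≤ 2 * (‖f s‖ * g) - L * ‖f s‖ ^ 2 := by nlinarith
        nlinarith [mul_le_mul_of_nonneg_right h7 hL0.le, sq_nonneg (g - L * ‖f s‖)]
      have hGs : 0 ≤ G s / L := div_nonneg (by simp only [hG]; positivity) hL0.le
      calc _ = e * (-(3 * L * ‖f s‖ ^ 2) - 2 * ((f s).re * (deriv f s).re
            + (f s).im * (deriv f s).im)) := by ring
        _ ≤ e * (G s / L) := mul_le_mul_of_nonneg_left h4 he0.le
        _ ≤ A * (G s / L) := mul_le_mul_of_nonneg_right heA hGs
        _ = A / L * G s := by ring)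
  rw [intervalIntegral.integral_const_mul] at key
  simp only [neg_add_cancel, mul_zero, Real.exp_zero, one_mul] at key
  rw [hE]
  have hB : Real.exp (-(6 * L) * R) * A ≤ 1 := by
    rw [hA, ← Real.exp_add, Real.exp_le_one_iff]
    nlinarith [ht.2]
  have k2 : ‖f (-R)‖ ^ 2 ≤ A * (‖f t‖ ^ 2 + 1 / L * ∫ s in (-R)..R, G s) := by
    have : A / L * ∫ s in (-R)..t, G s ≤ A / L * ∫ s in (-R)..R, G s :=
      mul_le_mul_of_nonneg_left hsub (by positivity)
    have e : A * (‖f t‖ ^ 2 + 1 / L * ∫ s in (-R)..R, G s)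
      = A * ‖f t‖ ^ 2 + A / L * ∫ s in (-R)..R, G s := by ring
    rw [e]; linarith
  have hGI : 0 ≤ ∫ s in (-R)..R, G s :=
    intervalIntegral.integral_nonneg (by linarith) (fun s _ => by simp only [hG]; positivity)
  have hpos : 0 ≤ ‖f t‖ ^ 2 + 1 / L * ∫ s in (-R)..R, G s := by positivity
  calc _ ≤ Real.exp (-(6 * L) * R) * (A * (‖f t‖ ^ 2 + 1 / L * ∫ s in (-R)..R, G s)) := by gcongr
    _ = (Real.exp (-(6 * L) * R) * A) * (‖f t‖ ^ 2 + 1 / L * ∫ s in (-R)..R, G s) := by ring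
    _ ≤ 1 * (‖f t‖ ^ 2 + 1 / L * ∫ s in (-R)..R, G s) := by gcongr
    _ = _ := by ring

theorem cee_cost_le_energy {W : ℂ → ℝ} (hWc : Continuous W) (hW : ∀ q, 0 ≤ W q)
    {f : ℝ → ℂ} (hf : ContDiff ℝ 1 f) {a b : ℝ} (hab : a ≤ b) :
    ceeCost W f a b ≤ oneDEnergy W f a b := by
  have hc := hf.continuous
  have hc' := hf.continuous_deriv le_rfl
  apply intervalIntegral.integral_mono_on hab ((cee_cont hWc hf).intervalIntegrable _ _)
    ((by fun_prop : Continuous _).intervalIntegrable _ _)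
  intro t _
  nlinarith [sq_nonneg (Real.sqrt 2 * Real.sqrt (W (f t)) - ‖deriv f t‖), cee_sqrt _ (hW (f t))]


theorem cee_pick (A : ℝ) {B : ℝ} (hB : 0 < B) :
    ∃ s0 > (0:ℝ), ∀ s, 0 < s → s ≤ s0 → s * A ≤ B := by
  refine ⟨B / (|A| + 1), by positivity, fun s hs h => ?_⟩
  rw [le_div_iff₀ (by positivity)] at h
  nlinarith [le_abs_self A]

theorem cee_params {m M : ℝ} (hm : 0 < m) (hmM : m < M) :
    ∃ ε > (0:ℝ), ∃ κ > (0:ℝ), ∃ D : ℝ, κ ≤ 3 / 4 ∧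
    (∀ X Y : ℝ, 0 ≤ X → ε * X ≤ Y → (D * X + 2 * m * ε * Y) ^ 2
      + (m * Y - 2 * m * ε * X) ^ 2 ≤ (1 - κ) * (m ^ 2 * X ^ 2 + M ^ 2 * Y ^ 2)) ∧
    (1 + κ) * ((m + κ) + (M + κ) * ε ^ 2) ≤ D + 3 * m * ε ^ 2 := by
  obtain ⟨Δ, hΔ, rfl⟩ : ∃ Δ > 0, M = m + Δ := ⟨M - m, by linarith, by ring⟩
  obtain ⟨δ, hδ, hmδ⟩ : ∃ δ > 0, 2 * m * δ = Δ ^ 2 / 4 :=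
    ⟨Δ ^ 2 / (8 * m), by positivity, by field_simp; ring⟩
  have hG : 0 < ((m + Δ) ^ 2 - m ^ 2) / 2 := by nlinarith
  obtain ⟨s1, p1, q1⟩ := cee_pick ((Δ + δ) ^ 2) (B := Δ ^ 2 / 4) (by positivity)
  obtain ⟨s2, p2, q2⟩ := cee_pick (2 * m * (Δ + δ)) hG
  obtain ⟨s3, p3, q3⟩ := cee_pick (4 * m ^ 2) hG
  obtain ⟨ε, hε, hε1, hε2, hε3⟩ : ∃ ε > (0:ℝ), ε ^ 2 ≤ s1 ∧ ε ^ 2 ≤ s2 ∧ ε ^ 2 ≤ s3 := by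
    refine ⟨Real.sqrt (min s1 (min s2 s3)), Real.sqrt_pos.2 (by positivity), ?_⟩
    rw [Real.sq_sqrt (by positivity)]
    simp
  have hεs : 0 < ε ^ 2 := by positivity
  replace q1 := q1 _ hεs hε1
  replace q2 := q2 _ hεs hε2
  replace q3 := q3 _ hεs hε3
  obtain ⟨k1, u1, v1⟩ := cee_pick (m ^ 2 + (m + Δ) ^ 2 * ε ^ 2) (B := ε ^ 2 * Δ ^ 2 / 2)
    (by positivity)
  obtain ⟨k2, u2, v2⟩ := cee_pick ((m + Δ) ^ 2) hG
  obtain ⟨k3, u3, v3⟩ := cee_pick ((m + 1) + (m + Δ + 1) * ε ^ 2 + 1 + ε ^ 2) (B := δ * ε ^ 2)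
    (by positivity)
  obtain ⟨κ, hκ, w0, w1, w2, w3⟩ : ∃ κ > (0:ℝ), κ ≤ 3 / 4 ∧ κ ≤ k1 ∧ κ ≤ k2 ∧ κ ≤ k3 := by
    refine ⟨min (3 / 4) (min k1 (min k2 k3)), by positivity, ?_⟩
    simp
  replace v1 := v1 _ hκ w1
  replace v2 := v2 _ hκ w2
  replace v3 := v3 _ hκ w3
  refine ⟨ε, hε, κ, hκ, m + (m + Δ - 3 * m + δ) * ε ^ 2, w0, ?_, ?_⟩
  · intro X Y hX hY
    obtain ⟨Z, hZ, rfl⟩ : ∃ Z ≥ 0, Y = ε * X + Z := ⟨Y - ε * X, by linarith, by ring⟩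
    have e1 : 0 ≤ ε ^ 2 * (Δ ^ 2 - 2 * m * δ - ε ^ 2 * (Δ + δ) ^ 2)
        - κ * (m ^ 2 + (m + Δ) ^ 2 * ε ^ 2) := by
      rw [hmδ]
      nlinarith
    have e2 : 0 ≤ (m + Δ) ^ 2 - κ * (m + Δ) ^ 2 - m ^ 2 - ε ^ 2 * (2 * m * (Δ + δ)) := by linarith
    have e3 : 0 ≤ (m + Δ) ^ 2 - κ * (m + Δ) ^ 2 - ε ^ 2 * (4 * m ^ 2) - m ^ 2 := by linarith
    have f1 := mul_nonneg (sq_nonneg X) e1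
    have f2 := mul_nonneg (mul_nonneg (mul_nonneg hε.le hX) hZ) e2
    have f3 := mul_nonneg (sq_nonneg Z) e3
    linear_combination f1 + 2 * f2 + f3
  · have : κ * κ ≤ κ * 1 := by gcongr; linarith
    have h2 : κ * κ * ε ^ 2 ≤ κ * 1 * ε ^ 2 := by gcongr
    nlinarith

theorem cee_reg (W : ℂ → ℝ) (hWreg : ContDiff ℝ 2 W)
    (hW : ∀ q, 0 ≤ W q) (hW0 : W 0 = 0) {lam1 lam2 m M κ : ℝ}
    (hHess : ∀ v : ℂ, iteratedFDeriv ℝ 2 W 0 ![v, v] =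
      2 * lam1 * v.re ^ 2 + 2 * lam2 * v.im ^ 2) (hm : 0 < m) (hmM : m < M)
    (h1 : m ^ 2 = 2 * lam1) (h2 : M ^ 2 = 2 * lam2) (hκ : 0 < κ) :
    ∃ r > (0:ℝ),
      (∀ z : ℂ, ‖z‖ ≤ r → (1 - κ) * (m ^ 2 * z.re ^ 2 + M ^ 2 * z.im ^ 2) ≤ 2 * W z) ∧
      (∀ z : ℂ, ‖z‖ ≤ r → 2 * W z ≤ (1 + κ) * (m ^ 2 * z.re ^ 2 + M ^ 2 * z.im ^ 2)) := by
  obtain ⟨r, hr, h⟩ := cee_taylor W hWreg hW hW0 lam1 lam2 hHess (κ * m ^ 2 / 2) (by positivity)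
  have hmM2 : m ^ 2 ≤ M ^ 2 := by gcongr
  have key : ∀ z : ℂ, ‖z‖ ≤ r → |2 * W z - (m ^ 2 * z.re ^ 2 + M ^ 2 * z.im ^ 2)| ≤
      κ * (m ^ 2 * z.re ^ 2 + M ^ 2 * z.im ^ 2) := by
    intro z hz
    have a := h z hz
    rw [cee_normsq] at a
    have b : κ * (m ^ 2 * z.im ^ 2) ≤ κ * (M ^ 2 * z.im ^ 2) := by gcongr
    rw [abs_le] at a ⊢
    rw [h1, h2] at *
    constructor <;> nlinarith [a.1, a.2]
  refine ⟨r, hr, fun z hz => ?_, fun z hz => ?_⟩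
  · have := (abs_le.1 (key z hz)).1; linarith
  · have := (abs_le.1 (key z hz)).2; linarith
/-- Lemma 3.2 ("lem21"): a curve crossing the well `0` from left to right, entering and
exiting at geodesic distance `η` nearly along the slow eigendirection, pays strictly more
than `2η`, with excess controlled by the square of its minimal distance to the well plus
an exponentially small term. -/
theorem crossing_energy_excess (W : ℂ → ℝ) (hWreg : ContDiff ℝ 2 W)
    (hW : ∀ q, 0 ≤ W q) (hW0 : W 0 = 0)
    (lam1 lam2 : ℝ) (h1 : 0 < lam1) (h12 : lam1 < lam2)
    (hHess : ∀ v : ℂ, iteratedFDeriv ℝ 2 W 0 ![v, v] =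
      2 * lam1 * v.re ^ 2 + 2 * lam2 * v.im ^ 2) :
    ∃ η > (0:ℝ), ∃ ε > (0:ℝ), ∃ c > (0:ℝ), ∃ C > (0:ℝ),
      ∀ R > (0:ℝ), ∀ f : ℝ → ℂ, ContDiff ℝ 1 f →
        ∀ a b : ℂ, f (-R) = a → f R = b →
          degDist W a 0 = η → degDist W b 0 = η →
          a.re < 0 → 0 < b.re → |a.im| ≤ ε * |a.re| → |b.im| ≤ ε * |b.re| →
          2 * η + c * (sInf ((fun t => ‖f t‖ ^ 2) '' Set.Icc (-R) R) +
              Real.exp (-C * R)) ≤ oneDEnergy W f (-R) R := by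

  have hWc : Continuous W := hWreg.continuous
  obtain ⟨m, hm, hm2⟩ : ∃ m > 0, m ^ 2 = 2 * lam1 :=
    ⟨Real.sqrt (2 * lam1), Real.sqrt_pos.2 (by linarith), Real.sq_sqrt (by linarith)⟩
  obtain ⟨M, hM, hM2⟩ : ∃ M > 0, M ^ 2 = 2 * lam2 :=
    ⟨Real.sqrt (2 * lam2), Real.sqrt_pos.2 (by linarith), Real.sq_sqrt (by linarith)⟩
  have hmM : m < M := by
    apply lt_of_pow_lt_pow_left₀ 2 hM.le
    linarith
  have hmM2 : m ^ 2 ≤ M ^ 2 := by linarith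
  obtain ⟨ε, hε, κ, hκ, D, hκ1, hP1, hP2⟩ := cee_params hm hmM
  obtain ⟨r, hr, hL, hU⟩ := cee_reg W hWreg hW hW0 hHess hm hmM hm2 hM2 hκ
  have hk : ∀ z : ℂ, ‖z‖ ≤ r → (m / 2) ^ 2 * ‖z‖ ^ 2 ≤ 2 * W z := by
    intro z hz
    have a := hL z hz
    rw [cee_normsq]
    have b : m ^ 2 * z.im ^ 2 ≤ M ^ 2 * z.im ^ 2 := by gcongr
    have e : 0 ≤ (3 / 4 - κ) * (m ^ 2 * z.re ^ 2 + M ^ 2 * z.im ^ 2) := by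
      apply mul_nonneg (by linarith); positivity
    nlinarith
  have hLL : ∀ z : ℂ, ‖z‖ ≤ r → 2 * W z ≤ (2 * M) ^ 2 * ‖z‖ ^ 2 := by
    intro z hz
    have a := hU z hz
    rw [cee_normsq]
    have b : m ^ 2 * z.re ^ 2 ≤ M ^ 2 * z.re ^ 2 := by gcongr
    have e : 0 ≤ (3 / 4 - κ) * (m ^ 2 * z.re ^ 2 + M ^ 2 * z.im ^ 2) := by
      apply mul_nonneg (by linarith); positivity
    have e2 : 0 ≤ M ^ 2 * z.re ^ 2 := by positivity
    have e3 : 0 ≤ M ^ 2 * z.im ^ 2 := by positivity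
    nlinarith
  obtain ⟨K, hK, hKz⟩ : ∃ K > 0, ∀ z : ℂ, ‖z‖ ≤ r → degDist W z 0 ≤ K * ‖z‖ ^ 2 := by
    refine ⟨(1 + κ) * (M + κ) / 2, by positivity, fun z hz => ?_⟩
    obtain ⟨g, hg, T, hT, g0, gT, hc⟩ := cee_comp hWc hW hκ hm hM hU z hz
    have h := cee_concat hWc (f := g) (g := g) hg hg (le_refl (0:ℝ)) hT rfl
    rw [g0, gT] at h
    have h00 : ceeCost W g 0 0 = 0 := by simp [ceeCost]
    rw [h00, zero_add] at h
    refine (h.trans hc).trans ?_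
    rw [cee_normsq]
    have e : (1 + κ) * (m * z.re ^ 2) ≤ (1 + κ) * (M * z.re ^ 2) := by gcongr
    nlinarith
  obtain ⟨η, hη, hηr⟩ : ∃ η > 0, η = m * r ^ 2 / 32 := ⟨_, by positivity, rfl⟩
  have hsmall : ∀ a : ℂ, degDist W a 0 = η → ‖a‖ < r / 2 := by
    intro a ha
    by_contra hcon
    have := cee_small hWc hW (by positivity) hr.le hk a (not_lt.1 hcon)
    rw [ha, hηr] at this
    have : 0 < m * r ^ 2 := by positivity
    linarith
  obtain ⟨c1, p1, q1⟩ := cee_pick (r ^ 2 / 4 + 1) (B := 4 * η) (by positivity)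
  obtain ⟨c2, p2, q2⟩ := cee_pick (1 + K / η) hm
  obtain ⟨c3, p3, q3⟩ := cee_pick (K / η * (2 / (2 * M))) one_pos
  obtain ⟨c, hc, w1, w2, w3⟩ : ∃ c > (0:ℝ), c ≤ c1 ∧ c ≤ c2 ∧ c ≤ c3 :=
    ⟨min c1 (min c2 c3), by positivity, by simp⟩
  replace q1 := q1 _ hc w1
  replace q2 := q2 _ hc w2
  replace q3 := q3 _ hc w3
  refine ⟨η, hη, ε, hε, c, hc, 6 * (2 * M), by positivity, ?_⟩
  rintro R hR f hf a b rfl rfl ha hb har hbr hai hbi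
  have hna := hsmall _ ha
  have hnb := hsmall _ hb
  have hfc := hf.continuous
  have hRR : -R ≤ R := by linarith
  have hbdd : BddBelow ((fun t => ‖f t‖ ^ 2) '' Set.Icc (-R) R) :=
    ⟨0, by rintro _ ⟨t, -, rfl⟩; positivity⟩
  have hinf : ∀ t ∈ Set.Icc (-R) R, sInf ((fun t => ‖f t‖ ^ 2) '' Set.Icc (-R) R) ≤ ‖f t‖ ^ 2 :=
    fun t ht => csInf_le hbdd ⟨t, ht, rfl⟩
  obtain ⟨tm, htm, htmin⟩ : ∃ t ∈ Set.Icc (-R) R,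
      sInf ((fun t => ‖f t‖ ^ 2) '' Set.Icc (-R) R) = ‖f t‖ ^ 2 := by
    have := (isCompact_Icc.image (by fun_prop : Continuous fun t => ‖f t‖ ^ 2)).sInf_mem
      ((Set.nonempty_Icc.2 hRR).image _)
    obtain ⟨t, ht, h⟩ := this
    exact ⟨t, ht, h.symm⟩
  set S := sInf ((fun t => ‖f t‖ ^ 2) '' Set.Icc (-R) R) with hS
  have hEC := cee_cost_le_energy hWc hW hf hRR
  by_cases hout : ∃ t0 ∈ Set.Icc (-R) R, r < ‖f t0‖
  · obtain ⟨t0, ht0, hout⟩ := hout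
    have h6 := cee_exit hWc hW hf (by positivity) hr.le hk hna.le t0 ht0 hout
    have hSr : S ≤ r ^ 2 / 4 := by
      have := hinf (-R) ⟨le_rfl, hRR⟩
      have h2 : ‖f (-R)‖ ^ 2 ≤ (r / 2) ^ 2 := by gcongr
      linarith
    have hexp : Real.exp (-(6 * (2 * M)) * R) ≤ 1 := by
      apply Real.exp_le_one_iff.2
      have : 0 < 6 * (2 * M) * R := by positivity
      linarith
    have : c * (S + Real.exp (-(6 * (2 * M)) * R)) ≤ c * (r ^ 2 / 4 + 1) := by gcongr
    linarith
  · push Not at hout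
    obtain ⟨τ, hτ, hτ0⟩ : ∃ τ ∈ Set.Icc (-R) R, (f τ).re = 0 := by
      have := intermediate_value_Icc hRR
        (Complex.continuous_re.comp hfc).continuousOn (f := fun t => (f t).re)
      exact this ⟨har.le, hbr.le⟩
    obtain ⟨t1, ht1, hc1⟩ := cee_half hWc hW hκ hm hM hε hL hU hP1 hP2 hf hτ.1 hτ0 hai
      (fun t ht => hout t ⟨ht.1, ht.2.trans hτ.2⟩)
    have hfn : ContDiff ℝ 1 (fun t => f (-t)) := hf.comp contDiff_neg
    obtain ⟨t2, ht2, hc2⟩ := cee_half hWc hW hκ hm hM hε hL hU hP1 hP2 hfn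
      (t0 := -R) (t2 := -τ) (by linarith [hτ.2]) (by simpa using hτ0) (by simpa using hbi)
      (fun t ht => hout (-t) ⟨by linarith [ht.2, hτ.1], by linarith [ht.1]⟩)
    rw [cee_cost_neg] at hc2
    simp only [neg_neg] at hc2
    have hadd := cee_cost_add hWc hf (-R) τ R
    have i1 := hinf t1 ⟨ht1.1, ht1.2.trans hτ.2⟩
    have i2 := hinf (-t2) ⟨by linarith [ht2.2, hτ.1], by linarith [ht2.1]⟩
    have j1 : m / 2 * S ≤ m / 2 * ‖f t1‖ ^ 2 := by gcongr
    have j2 : m / 2 * S ≤ m / 2 * ‖f (-t2)‖ ^ 2 := by gcongr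
    have hcost : 2 * η + m * S ≤ ceeCost W f (-R) R := by linarith
    have hex := cee_excess hWc hW (by positivity) hLL hf hR hout tm htm
    rw [← htmin] at hex
    have hKa := hKz (f (-R)) (by linarith)
    rw [ha] at hKa
    set X := Real.exp (-(6 * (2 * M)) * R) with hX
    set P := oneDEnergy W f (-R) R - ceeCost W f (-R) R with hP
    have hP0 : 0 ≤ P := by linarith
    have hS0 : 0 ≤ S := by rw [htmin]; positivity
    have hX0 : 0 ≤ X := (Real.exp_pos _).le
    have hXle : X ≤ K / η * (S + 2 / (2 * M) * P) := by
      have l1 : X * η ≤ X * (K * ‖f (-R)‖ ^ 2) := by gcongr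
      have l2 : K * (X * ‖f (-R)‖ ^ 2) ≤ K * (S + 2 / (2 * M) * P) := by gcongr
      rw [div_mul_eq_mul_div, le_div_iff₀ hη]
      linarith
    have l3 : c * X ≤ c * (K / η * (S + 2 / (2 * M) * P)) := by gcongr
    have l4 := mul_le_mul_of_nonneg_right q2 hS0
    have l5 := mul_le_mul_of_nonneg_right q3 hP0
    have hPe : oneDEnergy W f (-R) R = ceeCost W f (-R) R + P := by rw [hP]; ring
    rw [hPe]
    linarith
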